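/- arXiv:2001.04169 — 3 statements merged into one kernel-verified Lean document; each statement's English description precedes it below -/
import Mathlib

section
/- Let n ≥ 2 be an integer, let a > 0, and let K ⊆ ℝⁿ be a compact convex set such that the n-dimensional Lebesgue measure of K ∩ {x ∈ ℝⁿ : 0 ≤ x₁ ≤ r} equals rⁿ/n! for every r ∈ [0, a]. Then for every r ∈ (0, a), the (n−1)-dimensional Lebesgue measure of the slice {y ∈ ℝ^{n−1} : (r, y) ∈ K} equals r^{n−1}/(n−1)!. -/
open MeasureTheory Set Filter Topology in
lemma slice_scale {m : ℕ} {K : Set (ℝ × (Fin m → ℝ))} (hK : IsCompact K) (hconv : Convex ℝ K)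
    (hfin : ∀ r : ℝ, volume {y : Fin m → ℝ | (r, y) ∈ K} ≠ ⊤)
    {t : ℝ} {y : Fin m → ℝ} (hy : (t, y) ∈ K) {c : ℝ} (h0 : 0 ≤ c) (h1 : c ≤ 1) (r s : ℝ)
    (hs : s = c * r + (1 - c) * t) :
    c ^ m * (volume {y : Fin m → ℝ | (r, y) ∈ K}).toReal
      ≤ (volume {y : Fin m → ℝ | (s, y) ∈ K}).toReal := by
  have hsub : AffineMap.homothety y c '' {y : Fin m → ℝ | (r, y) ∈ K}
      ⊆ {y : Fin m → ℝ | (s, y) ∈ K} := by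
    rintro _ ⟨z, hz, rfl⟩
    have := hconv hz hy h0 (sub_nonneg.2 h1) (by ring)
    show (s, _) ∈ K
    convert! this using 1
    ext
    · simp [hs]
    · simp [AffineMap.homothety_apply]; ring
  have h := ENNReal.toReal_mono (hfin s) (measure_mono hsub (μ := volume))
  rw [Measure.addHaar_image_homothety, ENNReal.toReal_mul, ENNReal.toReal_ofReal (abs_nonneg _),
    abs_of_nonneg (by positivity)] at h
  simpa using h

open MeasureTheory Set Filter Topology in
lemma slice_fin {m : ℕ} {K : Set (ℝ × (Fin m → ℝ))} (hK : IsCompact K) (r : ℝ) :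
    volume {y : Fin m → ℝ | (r, y) ∈ K} ≠ ⊤ := by
  refine ((measure_mono ?_).trans_lt (hK.image continuous_snd).measure_lt_top).ne
  intro y hy
  exact ⟨_, hy, rfl⟩

open MeasureTheory Set Filter Topology in
lemma slice_ae {m : ℕ} {K : Set (ℝ × (Fin m → ℝ))} (hK : IsCompact K) (a : ℝ)
    (hvol : ∀ r ∈ Set.Icc (0 : ℝ) a,
      volume (K ∩ {x : ℝ × (Fin m → ℝ) | 0 ≤ x.1 ∧ x.1 ≤ r}) =
        ENNReal.ofReal (r ^ (m + 1) / (m + 1).factorial)) :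
    ∀ᵐ r : ℝ, r ∈ Ioo 0 a → (volume {y : Fin m → ℝ | (r, y) ∈ K}).toReal
      = r ^ m / m.factorial := by
  have hmeas : Measurable (fun r : ℝ => volume {y : Fin m → ℝ | (r, y) ∈ K}) :=
    measurable_measure_prodMk_left hK.measurableSet
  have hint : Integrable (fun r : ℝ => (volume {y : Fin m → ℝ | (r, y) ∈ K}).toReal) := by
    refine integrable_toReal_of_lintegral_ne_top hmeas.aemeasurable ?_
    have h := Measure.prod_apply (μ := (volume : Measure ℝ))
      (ν := (volume : Measure (Fin m → ℝ))) hK.measurableSet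
    have h2 := hK.measure_lt_top (μ := (volume : Measure (ℝ × (Fin m → ℝ))))
    rw [Measure.volume_eq_prod, h] at h2
    exact h2.ne
  have hI : ∀ x ∈ Ioo 0 a, ∫ r in (0:ℝ)..x, (volume {y : Fin m → ℝ | (r, y) ∈ K}).toReal
      = x ^ (m + 1) / (m + 1).factorial := by
    intro x hx
    rw [intervalIntegral.integral_of_le hx.1.le, ← integral_Icc_eq_integral_Ioc,
      integral_toReal hmeas.aemeasurable (ae_of_all _ fun r => (slice_fin hK r).lt_top)]
    have h := hvol x ⟨hx.1.le, hx.2.le⟩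
    have hms : MeasurableSet (K ∩ {p : ℝ × (Fin m → ℝ) | 0 ≤ p.1 ∧ p.1 ≤ x}) :=
      hK.measurableSet.inter (measurable_fst measurableSet_Icc)
    rw [Measure.volume_eq_prod, Measure.prod_apply hms] at h
    have h0 := hx.1
    rw [← ENNReal.toReal_ofReal (show 0 ≤ x ^ (m + 1) / ((m + 1).factorial : ℝ) by positivity), ← h,
      ← lintegral_indicator measurableSet_Icc]
    congr 2
    ext r
    by_cases hr : r ∈ Icc 0 x
    · rw [indicator_of_mem hr]
      congr 1
      ext y
      simp [hr.1, hr.2]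
    · rw [indicator_of_notMem hr]
      symm
      convert! measure_empty (μ := (volume : Measure (Fin m → ℝ)))
      ext y
      simp only [mem_preimage, mem_inter_iff, mem_ofPred_eq, mem_empty_iff_false, iff_false]
      exact fun hh => hr hh.2
  filter_upwards [LocallyIntegrable.ae_hasDerivAt_integral hint.locallyIntegrable] with x hx hxa
  have h1 := hx 0
  have h2 : HasDerivAt (fun x : ℝ => x ^ (m + 1) / (m + 1).factorial)
      (((m + 1 : ℕ) : ℝ) * x ^ m / (m + 1).factorial) x := by
    simpa using (hasDerivAt_pow (m + 1) x).div_const ((m + 1).factorial : ℝ)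
  have h3 := h2.congr_of_eventuallyEq (f₁ := fun x => ∫ r in (0:ℝ)..x, (volume {y : Fin m → ℝ | (r, y) ∈ K}).toReal)
    (by filter_upwards [Ioo_mem_nhds hxa.1 hxa.2] with y hy using hI y hy)
  rw [h1.unique h3, Nat.factorial_succ]
  push_cast
  have : (m.factorial : ℝ) ≠ 0 := by positivity
  have : (m + 1 : ℝ) ≠ 0 := by positivity
  field_simp

open MeasureTheory Set Filter Topology in
lemma slice_main {m : ℕ} {K : Set (ℝ × (Fin m → ℝ))} (hK : IsCompact K) (hconv : Convex ℝ K)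
    (hm : 1 ≤ m) (a : ℝ)
    (hvol : ∀ r ∈ Set.Icc (0 : ℝ) a,
      volume (K ∩ {x : ℝ × (Fin m → ℝ) | 0 ≤ x.1 ∧ x.1 ≤ r}) =
        ENNReal.ofReal (r ^ (m + 1) / (m + 1).factorial)) (r : ℝ) (hr : r ∈ Ioo 0 a) :
    volume {y : Fin m → ℝ | (r, y) ∈ K} = ENNReal.ofReal (r ^ m / m.factorial) := by
  have hd := Measure.dense_of_ae (slice_ae hK a hvol)
  obtain ⟨t, ht, hrt, hta⟩ := hd.exists_between hr.2
  have hr0 := hr.1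
  have ht' := ht ⟨hr.1.trans hrt, hta⟩
  have hne : {y : Fin m → ℝ | (t, y) ∈ K}.Nonempty := by
    rw [nonempty_iff_ne_empty]
    intro he
    rw [he] at ht'
    have : 0 < t ^ m / (m.factorial : ℝ) := by
      have := hr0.trans hrt
      positivity
    rw [measure_empty, ENNReal.toReal_zero] at ht'
    exact this.ne ht'
  obtain ⟨y, hy⟩ := hne
  have key := fun {c : ℝ} (h0 : 0 ≤ c) (h1 : c ≤ 1) r s hs =>
    slice_scale hK hconv (slice_fin hK) hy h0 h1 r s hs
  rw [← ENNReal.ofReal_toReal (slice_fin hK r)]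
  congr 1
  have htr : t - r ≠ 0 := by linarith
  apply le_antisymm
  · have hc : Tendsto (fun s : ℝ => s ^ m / m.factorial - ((t - s) / (t - r)) ^ m *
        (volume {y : Fin m → ℝ | (r, y) ∈ K}).toReal) (𝓝[>] r)
        (𝓝 (r ^ m / m.factorial - ((t - r) / (t - r)) ^ m *
        (volume {y : Fin m → ℝ | (r, y) ∈ K}).toReal)) := by
      apply Tendsto.mono_left _ nhdsWithin_le_nhds
      apply ContinuousAt.tendsto (f := fun s : ℝ => s ^ m / m.factorial - ((t - s) / (t - r)) ^ m *
        (volume {y : Fin m → ℝ | (r, y) ∈ K}).toReal)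
      fun_prop
    rw [div_self htr, one_pow, one_mul] at hc
    refine sub_nonneg.1 (ge_of_tendsto_of_frequently hc ?_)
    intro hev
    obtain ⟨u, hu, hsub⟩ := (mem_nhdsGT_iff_exists_Ioo_subset).1 hev
    obtain ⟨s, hs, hrs, hsu⟩ := hd.exists_between (lt_min hu hrt)
    have hst := hsu.trans_le (min_le_right _ _)
    refine hsub ⟨hrs, hsu.trans_le (min_le_left _ _)⟩ ?_
    beta_reduce
    rw [← hs ⟨hr0.trans hrs, hst.trans hta⟩]
    refine sub_nonneg.2 (key (div_nonneg (by linarith) (by linarith))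
      ((div_le_one (by linarith)).2 (by linarith)) r s ?_)
    field_simp
    ring
  · have hc : Tendsto (fun s : ℝ => ((t - r) / (t - s)) ^ m * (s ^ m / m.factorial)) (𝓝[<] r)
        (𝓝 (((t - r) / (t - r)) ^ m * (r ^ m / m.factorial))) := by
      apply Tendsto.mono_left _ nhdsWithin_le_nhds
      apply ContinuousAt.tendsto
        (f := fun s : ℝ => ((t - r) / (t - s)) ^ m * (s ^ m / m.factorial))
      fun_prop (disch := assumption)
    rw [div_self htr, one_pow, one_mul] at hc
    refine le_of_tendsto_of_frequently hc ?_
    intro hev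
    obtain ⟨u, hu, hsub⟩ := (mem_nhdsLT_iff_exists_Ioo_subset).1 hev
    obtain ⟨s, hs, hus, hsr⟩ := hd.exists_between (max_lt hu hr0)
    have hs0 := (le_max_right _ _).trans_lt hus
    refine hsub ⟨(le_max_left _ _).trans_lt hus, hsr⟩ ?_
    beta_reduce
    rw [← hs ⟨hs0, hsr.trans hr.2⟩]
    refine key (div_nonneg (by linarith) (by linarith))
      ((div_le_one (by linarith)).2 (by linarith)) s r ?_
    have : t - s ≠ 0 := by linarith
    field_simp
    ring


/-- If the slab volumes of a compact convex set `K ⊆ ℝ × ℝ^{n-1}` satisfy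
`vol(K ∩ {0 ≤ x₁ ≤ r}) = rⁿ/n!` for all `r ∈ [0, a]`, then the slice of `K` at any
`r ∈ (0, a)` has `(n-1)`-dimensional volume `r^{n-1}/(n-1)!`. -/
theorem slice_volume_from_slab_volume (n : ℕ) (hn : 2 ≤ n) (a : ℝ) (ha : 0 < a)
    (K : Set (ℝ × (Fin (n - 1) → ℝ))) (hK : IsCompact K) (hconv : Convex ℝ K)
    (hvol : ∀ r ∈ Set.Icc (0 : ℝ) a,
      MeasureTheory.volume (K ∩ {x : ℝ × (Fin (n - 1) → ℝ) | 0 ≤ x.1 ∧ x.1 ≤ r}) =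
        ENNReal.ofReal (r ^ n / n.factorial)) :
    ∀ r ∈ Set.Ioo (0 : ℝ) a,
      MeasureTheory.volume {y : Fin (n - 1) → ℝ | (r, y) ∈ K} =
        ENNReal.ofReal (r ^ (n - 1) / (n - 1).factorial) := by
  intro r hr
  obtain ⟨m, rfl⟩ : ∃ m, n = m + 1 := ⟨n - 1, by omega⟩
  exact slice_main (m := m) hK hconv (by omega) a hvol r hr
end

section
/- Let n ≥ 1 be an integer, let a > 0, and let K ⊆ ℝⁿ be a compact convex set containing the origin such that the Lebesgue measure of K ∩ {x ∈ ℝⁿ : 0 ≤ x₁ ≤ r} equals rⁿ/n! for every r ∈ [0, a]. Then K ∩ {x ∈ ℝⁿ : 0 ≤ x₁ ≤ a} = {λ·v : λ ∈ [0,1], v ∈ K, v₁ = a}, i.e. this portion of K is the cone with apex the origin over the slice Σ = K ∩ {x ∈ ℝⁿ : x₁ = a}. -/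
open scoped Pointwise in
theorem slab_volume_forces_cone (n : ℕ) (hn : 0 < n) (a : ℝ) (ha : 0 < a)
    (K : Set (Fin n → ℝ)) (hK : IsCompact K) (hconv : Convex ℝ K)
    (h0 : (0 : Fin n → ℝ) ∈ K)
    (hvol : ∀ r ∈ Set.Icc (0 : ℝ) a,
      MeasureTheory.volume (K ∩ {x : Fin n → ℝ | 0 ≤ x ⟨0, hn⟩ ∧ x ⟨0, hn⟩ ≤ r}) =
        ENNReal.ofReal (r ^ n / n.factorial)) :
    K ∩ {x : Fin n → ℝ | 0 ≤ x ⟨0, hn⟩ ∧ x ⟨0, hn⟩ ≤ a} =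
      {x : Fin n → ℝ | ∃ l ∈ Set.Icc (0 : ℝ) 1, ∃ v ∈ K, v ⟨0, hn⟩ = a ∧ x = l • v} := by
  set i : Fin n := ⟨0, hn⟩ with hi
  let S : ℝ → Set (Fin n → ℝ) := fun r => K ∩ {x : Fin n → ℝ | 0 ≤ x i ∧ x i ≤ r}
  have hSvol : ∀ r ∈ Set.Icc (0 : ℝ) a,
      MeasureTheory.volume (S r) = ENNReal.ofReal (r ^ n / n.factorial) := hvol
  have hScl : ∀ r, IsClosed {x : Fin n → ℝ | 0 ≤ x i ∧ x i ≤ r} := fun r =>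
    (isClosed_le continuous_const (continuous_apply i)).inter
      (isClosed_le (continuous_apply i) continuous_const)
  have hScomp : ∀ r, IsCompact (S r) := fun r => hK.inter_right (hScl r)
  have hSconv : ∀ r, Convex ℝ (S r) := by
    intro r
    refine hconv.inter ?_
    intro x hx y hy p q hp hq hpq
    simp only [Set.mem_setOf_eq, Pi.add_apply, Pi.smul_apply, smul_eq_mul] at *
    refine ⟨by nlinarith [mul_nonneg hp hx.1, mul_nonneg hq hy.1], ?_⟩
    have h1 := mul_le_mul_of_nonneg_left hx.2 hp
    have h2 := mul_le_mul_of_nonneg_left hy.2 hq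
    calc p * x i + q * y i ≤ p * r + q * r := add_le_add h1 h2
      _ = r := by rw [← add_mul, hpq, one_mul]
  have hnf : (0 : ℝ) < n.factorial := by exact_mod_cast n.factorial_pos
  have key : ∀ s, 0 < s → s ≤ a → ∀ x ∈ S s, ∃ v ∈ S a, x = (s / a) • v := by
    intro s hs hsa
    have ht : 0 < s / a := div_pos hs ha
    let T : Set (Fin n → ℝ) := (fun v => (s / a) • v) '' S a
    have hTcomp : IsCompact T := (hScomp a).image (continuous_const_smul _)
    have hTS : T ⊆ S s := by
      rintro _ ⟨v, ⟨hv, hv1, hv2⟩, rfl⟩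
      refine ⟨hconv.smul_mem_of_zero_mem h0 hv ⟨ht.le, (div_le_one ha).2 hsa⟩, ?_, ?_⟩
      · simpa using mul_nonneg ht.le hv1
      · have := mul_le_mul_of_nonneg_left hv2 ht.le
        rw [div_mul_cancel₀ _ ha.ne'] at this
        simpa using this
    have hTvol : MeasureTheory.volume T = MeasureTheory.volume (S s) := by
      have h := MeasureTheory.Measure.addHaar_smul
        (MeasureTheory.volume : MeasureTheory.Measure (Fin n → ℝ)) (s / a) (S a)
      have h' : T = (s / a) • S a := rfl
      rw [h', h, hSvol a ⟨ha.le, le_rfl⟩, hSvol s ⟨hs.le, hsa⟩,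
        ← ENNReal.ofReal_mul (abs_nonneg _), Module.finrank_fin_fun,
        abs_of_pos (pow_pos ht n)]
      congr 1
      field_simp
      rw [← mul_pow, div_mul_cancel₀ _ ha.ne']
    have hnull : MeasureTheory.volume (S s \ T) = 0 := by
      rw [MeasureTheory.measure_diff hTS hTcomp.measurableSet.nullMeasurableSet
        hTcomp.measure_lt_top.ne, hTvol, tsub_self]
    have hint : interior (S s) ⊆ T := by
      have ho : IsOpen (interior (S s) \ T) := isOpen_interior.sdiff hTcomp.isClosed
      have := (ho.measure_eq_zero_iff MeasureTheory.volume).1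
        (MeasureTheory.measure_mono_null (Set.diff_subset_diff_left interior_subset) hnull)
      exact Set.diff_eq_empty.1 this
    have hne : (interior (S s)).Nonempty := by
      by_contra hcon
      rw [Set.not_nonempty_iff_eq_empty] at hcon
      have hf := (hSconv s).addHaar_frontier MeasureTheory.volume
      rw [frontier, hcon, Set.diff_empty, (hScomp s).isClosed.closure_eq,
        hSvol s ⟨hs.le, hsa⟩, ENNReal.ofReal_eq_zero] at hf
      have : 0 < s ^ n / (n.factorial : ℝ) := by positivity
      linarith
    have hsub : S s ⊆ T := by
      have h1 := (hSconv s).closure_interior_eq_closure_of_nonempty_interior hne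
      rw [(hScomp s).isClosed.closure_eq] at h1
      rw [← h1]
      exact closure_minimal hint hTcomp.isClosed
    intro x hx
    obtain ⟨v, hv, rfl⟩ := hsub hx
    exact ⟨v, hv, rfl⟩
  have key2 : ∀ x ∈ S a, 0 < x i → ∃ v ∈ K, v i = a ∧ x = (x i / a) • v := by
    intro x hx hxi
    obtain ⟨v, hv, hxv⟩ := key (x i) hxi hx.2.2 x ⟨hx.1, hx.2.1, le_rfl⟩
    refine ⟨v, hv.1, ?_, hxv⟩
    have h := congrFun hxv i
    simp only [Pi.smul_apply, smul_eq_mul] at h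
    field_simp at h
    linarith
  have hex : ∃ v ∈ K, v i = a := by
    by_contra hcon
    have hsub : S a ⊆ S 0 := by
      intro x hx
      refine ⟨hx.1, hx.2.1, ?_⟩
      by_contra hpos
      obtain ⟨v, hv, hva, _⟩ := key2 x hx (not_le.1 hpos)
      exact hcon ⟨v, hv, hva⟩
    have hm := MeasureTheory.measure_mono (μ := MeasureTheory.volume) hsub
    rw [hSvol a ⟨ha.le, le_rfl⟩, hSvol 0 ⟨le_rfl, ha.le⟩, zero_pow hn.ne', zero_div,
      ENNReal.ofReal_zero, nonpos_iff_eq_zero, ENNReal.ofReal_eq_zero] at hm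
    have : 0 < a ^ n / (n.factorial : ℝ) := by positivity
    linarith
  apply Set.Subset.antisymm
  · intro x hx
    rcases hx.2.1.lt_or_eq with hpos | hzero
    · obtain ⟨v, hv, hva, hxv⟩ := key2 x hx hpos
      exact ⟨x i / a, ⟨(div_pos hpos ha).le, (div_le_one ha).2 hx.2.2⟩, v, hv, hva, hxv⟩
    · obtain ⟨v, hv, hva⟩ := hex
      refine ⟨0, ⟨le_rfl, zero_le_one⟩, v, hv, hva, ?_⟩
      rw [zero_smul]
      obtain ⟨C, hC⟩ := hK.isBounded.exists_norm_le
      have hC0 : 0 ≤ C := by simpa using hC 0 h0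
      rw [← norm_le_zero_iff]
      by_contra hlt
      have hlt := not_le.1 hlt
      have hbd : ∀ s, 0 < s → s ≤ a → ‖x‖ ≤ s / a * C := by
        intro s hs hsa
        obtain ⟨w, hw, hxw⟩ := key s hs hsa x ⟨hx.1, hx.2.1, hzero ▸ hs.le⟩
        rw [hxw, norm_smul, Real.norm_of_nonneg (div_pos hs ha).le]
        exact mul_le_mul_of_nonneg_left (hC w hw.1) (div_pos hs ha).le
      have hxC : ‖x‖ ≤ C := hC x hx.1
      have hCp : 0 < C := lt_of_lt_of_le hlt hxC
      have h := hbd (a * (‖x‖ / (2 * C))) (by positivity) (by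
        apply mul_le_of_le_one_right ha.le
        rw [div_le_one (by positivity)]
        linarith)
      have h2 : a * (‖x‖ / (2 * C)) / a * C = ‖x‖ / 2 := by field_simp
      rw [h2] at h
      linarith
  · rintro x ⟨l, hl, v, hv, hva, rfl⟩
    refine ⟨hconv.smul_mem_of_zero_mem h0 hv hl, ?_, ?_⟩
    · simp only [Pi.smul_apply, smul_eq_mul, hva]
      exact mul_nonneg hl.1 ha.le
    · simp only [Pi.smul_apply, smul_eq_mul, hva]
      exact mul_le_of_le_one_left ha.le hl.2
end

section
/- Let n ≥ 1 be an integer, let a > 0 and ε ∈ (0, a], and let K ⊆ ℝⁿ be a compact convex set containing the origin such that the Lebesgue measure of K ∩ {x ∈ ℝⁿ : 0 ≤ x₁ ≤ r} equals rⁿ/n! for every r ∈ [0, a]. If the segment {(t, 0, …, 0) : t ∈ [0, ε]} is contained in K, then the full segment {(t, 0, …, 0) : t ∈ [0, a]} is contained in K. -/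
theorem subset_of_volume_le {n : ℕ} {C D : Set (Fin n → ℝ)} (hC : Convex ℝ C)
    (hD : IsClosed D) (hDC : D ⊆ C) (hpos : MeasureTheory.volume C ≠ 0)
    (hle : MeasureTheory.volume C ≤ MeasureTheory.volume D)
    (hfin : MeasureTheory.volume D ≠ ⊤) : C ⊆ D := by
  have hint : (interior C).Nonempty := by
    by_contra h
    rw [Set.not_nonempty_iff_eq_empty] at h
    apply hpos
    refine MeasureTheory.measure_mono_null ?_ (hC.addHaar_frontier MeasureTheory.volume)
    rw [frontier, h, Set.diff_empty]
    exact subset_closure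
  have h1 : MeasureTheory.volume (C \ D) = 0 := by
    rw [MeasureTheory.measure_diff hDC hD.measurableSet.nullMeasurableSet hfin]
    exact tsub_eq_zero_of_le hle
  have h2 : interior C \ D = ∅ := by
    rw [← (isOpen_interior.sdiff hD).measure_eq_zero_iff MeasureTheory.volume]
    exact MeasureTheory.measure_mono_null (Set.diff_subset_diff_left interior_subset) h1
  have h3 : closure (interior C) ⊆ D := closure_minimal (Set.diff_eq_empty.mp h2) hD
  exact (subset_closure.trans
    (hC.closure_interior_eq_closure_of_nonempty_interior hint).symm.subset).trans h3

/-- If a compact convex set `K ⊆ ℝⁿ` containing the origin satisfies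
`vol(K ∩ {0 ≤ x₁ ≤ r}) = rⁿ/n!` for all `r ∈ [0, a]`, and `K` contains the segment
`{t • e₁ : t ∈ [0, ε]}` for some `ε ∈ (0, a]`, then `K` contains the full segment
`{t • e₁ : t ∈ [0, a]}`. -/
theorem segment_propagation (n : ℕ) (hn : 0 < n) (a ε : ℝ) (ha : 0 < a)
    (hε : ε ∈ Set.Ioc (0 : ℝ) a)
    (K : Set (Fin n → ℝ)) (hK : IsCompact K) (hconv : Convex ℝ K)
    (h0 : (0 : Fin n → ℝ) ∈ K)
    (hvol : ∀ r ∈ Set.Icc (0 : ℝ) a,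
      MeasureTheory.volume (K ∩ {x : Fin n → ℝ | 0 ≤ x ⟨0, hn⟩ ∧ x ⟨0, hn⟩ ≤ r}) =
        ENNReal.ofReal (r ^ n / n.factorial))
    (hseg : ∀ t ∈ Set.Icc (0 : ℝ) ε,
      t • ((Pi.single (⟨0, hn⟩ : Fin n) (1 : ℝ) : Fin n → ℝ)) ∈ K) :
    ∀ t ∈ Set.Icc (0 : ℝ) a,
      t • ((Pi.single (⟨0, hn⟩ : Fin n) (1 : ℝ) : Fin n → ℝ)) ∈ K := by
  obtain ⟨he0, hea⟩ := hε
  set i : Fin n := ⟨0, hn⟩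
  let S : ℝ → Set (Fin n → ℝ) := fun r => {x | 0 ≤ x i ∧ x i ≤ r}
  have hScl : ∀ r, IsClosed (S r) := fun r =>
    (isClosed_le continuous_const (continuous_apply i)).inter
      (isClosed_le (continuous_apply i) continuous_const)
  have hSconv : ∀ r, Convex ℝ (S r) := by
    intro r x hx y hy s t hs ht hst
    have h1 := mul_nonneg hs hx.1
    have h2 := mul_nonneg ht hy.1
    have h3 := mul_le_mul_of_nonneg_left hx.2 hs
    have h4 := mul_le_mul_of_nonneg_left hy.2 ht
    refine ⟨?_, ?_⟩
    · simp only [Pi.add_apply, Pi.smul_apply, smul_eq_mul]; linarith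
    · simp only [Pi.add_apply, Pi.smul_apply, smul_eq_mul]
      have : s * r + t * r = r := by rw [← add_mul, hst, one_mul]
      linarith
  set c : ℝ := ε / a
  have hc0 : 0 < c := div_pos he0 ha
  have hc1 : c ≤ 1 := (div_le_one ha).2 hea
  have hca : c * a = ε := div_mul_cancel₀ _ ha.ne'
  let f : (Fin n → ℝ) → (Fin n → ℝ) := fun x => c • x
  let D : Set (Fin n → ℝ) := f '' (K ∩ S a)
  have hDcl : IsClosed D :=
    ((hK.inter_right (hScl a)).image (continuous_const_smul c)).isClosed
  have hDsub : D ⊆ K ∩ S ε := by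
    rintro _ ⟨x, ⟨hxK, hx0, hxa⟩, rfl⟩
    refine ⟨hconv.smul_mem_of_zero_mem h0 hxK ⟨hc0.le, hc1⟩, mul_nonneg hc0.le hx0, ?_⟩
    change c * x i ≤ ε
    rw [← hca]
    exact mul_le_mul_of_nonneg_left hxa hc0.le
  have hvD : MeasureTheory.volume D = ENNReal.ofReal (ε ^ n / n.factorial) := by
    have h := MeasureTheory.Measure.addHaar_image_homothety
      (MeasureTheory.volume : MeasureTheory.Measure (Fin n → ℝ)) 0 c (K ∩ S a)
    have hf : (⇑(AffineMap.homothety (0 : Fin n → ℝ) c)) = f := by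
      ext x; simp [AffineMap.homothety_apply, f]
    rw [hf, hvol a ⟨ha.le, le_rfl⟩, ← ENNReal.ofReal_mul (abs_nonneg _)] at h
    change MeasureTheory.volume (f '' _) = _
    rw [h, Module.finrank_fin_fun, abs_of_pos (pow_pos hc0 n), ← hca, mul_pow, mul_div_assoc]
  have hvC : MeasureTheory.volume (K ∩ S ε) = ENNReal.ofReal (ε ^ n / n.factorial) :=
    hvol ε ⟨he0.le, hea⟩
  have key : K ∩ S ε ⊆ D := by
    apply subset_of_volume_le (hconv.inter (hSconv ε)) hDcl hDsub
    · rw [hvC]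
      exact (ENNReal.ofReal_pos.2 (by positivity)).ne'
    · rw [hvC, hvD]
    · rw [hvD]; exact ENNReal.ofReal_ne_top
  obtain ⟨x, ⟨hxK, -⟩, hx⟩ := key
    (show ε • (Pi.single i (1 : ℝ) : Fin n → ℝ) ∈ K ∩ S ε from
      ⟨hseg ε ⟨he0.le, le_rfl⟩, by simp [S, he0.le]⟩)
  have hxa : x = a • (Pi.single i (1 : ℝ) : Fin n → ℝ) := by
    change c • x = _ at hx
    rw [← hca, mul_smul] at hx
    exact smul_right_injective _ hc0.ne' hx
  intro t ht
  have := hconv.smul_mem_of_zero_mem h0 hxK (t := t / a)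
    ⟨div_nonneg ht.1 ha.le, (div_le_one ha).2 ht.2⟩
  rwa [hxa, smul_smul, div_mul_cancel₀ _ ha.ne'] at this
end
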